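/- arXiv:2309.14388 — 3 statements merged into one kernel-verified Lean document; each statement's English description precedes it below -/
import Mathlib

section
/- Let A be an n×n real matrix such that A + I is invertible and 2‖(A + I)⁻¹‖₂ < 1, where ‖·‖₂ denotes the spectral norm. Then for every b ∈ ℝⁿ, the absolute value equation Ax − |x| = b has exactly one solution x ∈ ℝⁿ. -/
/-!
Since `x + |x| = 2 x⁺`, the equation `A x - |x| = b` is equivalent to the fixed-point equation
`x = (A + I)⁻¹ (x + |x| + b)`. The map `x ↦ x + |x| + b` is 2-Lipschitz for the Euclidean norm
(`norm_add_abs_sub_le`) and `(A + I)⁻¹` is Lipschitz with constant `sigmaMax (A + I)⁻¹`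
(`norm_toEuclideanLin_le_sigmaMax`), so under the hypothesis the right-hand side is a contraction
of `EuclideanSpace ℝ (Fin n)`, and Banach's theorem gives existence and uniqueness.
-/

/-- The maximum singular value (spectral norm) of a square real matrix:
the supremum of `‖M x‖` over unit Euclidean-norm vectors `x`. -/
noncomputable def sigmaMax {n : ℕ} (M : Matrix (Fin n) (Fin n) ℝ) : ℝ :=
  ⨆ x : Metric.sphere (0 : EuclideanSpace ℝ (Fin n)) 1,
    ‖Matrix.toEuclideanLin M x.1‖

theorem sigmaMax_nonneg {n : ℕ} (M : Matrix (Fin n) (Fin n) ℝ) : 0 ≤ sigmaMax M :=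
  Real.iSup_nonneg fun _ => norm_nonneg _

/-- The supremum defining `sigmaMax` is a genuine one (the family is bounded), so it bounds the
dilation of every vector. For `n = 0` the supremum is over the empty set, but then `x = 0`. -/
theorem norm_toEuclideanLin_le_sigmaMax {n : ℕ} (M : Matrix (Fin n) (Fin n) ℝ)
    (x : EuclideanSpace ℝ (Fin n)) :
    ‖Matrix.toEuclideanLin M x‖ ≤ sigmaMax M * ‖x‖ := by
  rcases eq_or_ne x 0 with rfl | hx
  · simp
  have hbdd : BddAbove (Set.range fun y : Metric.sphere (0 : EuclideanSpace ℝ (Fin n)) 1 =>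
      ‖Matrix.toEuclideanLin M y.1‖) := by
    refine ⟨‖(Matrix.toEuclideanLin M).toContinuousLinearMap‖, ?_⟩
    rintro _ ⟨y, rfl⟩
    have hy : ‖y.1‖ = 1 := by simp
    simpa [hy] using (Matrix.toEuclideanLin M).toContinuousLinearMap.le_opNorm y.1
  have hx' : 0 < ‖x‖ := norm_pos_iff.2 hx
  have hu : ‖x‖⁻¹ • x ∈ Metric.sphere (0 : EuclideanSpace ℝ (Fin n)) 1 := by
    simp [norm_smul, hx'.ne']
  have hle : ‖Matrix.toEuclideanLin M (‖x‖⁻¹ • x)‖ ≤ sigmaMax M :=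
    le_ciSup hbdd ⟨‖x‖⁻¹ • x, hu⟩
  rw [map_smul, norm_smul, norm_inv, norm_norm, inv_mul_le_iff₀ hx'] at hle
  linarith

/-- Each coordinate map `t ↦ t + |t| + c` is 2-Lipschitz, hence so is the vector map. -/
theorem norm_add_abs_sub_le {n : ℕ} (b : Fin n → ℝ) (y z : EuclideanSpace ℝ (Fin n)) :
    ‖WithLp.toLp 2 (fun i => y i + |y i| + b i) -
      WithLp.toLp 2 (fun i => z i + |z i| + b i)‖ ≤ 2 * ‖y - z‖ := by
  have h2 : 2 * ‖y - z‖ = ‖(2 : ℝ) • (y - z)‖ := by simp [norm_smul]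
  rw [h2, EuclideanSpace.norm_eq, EuclideanSpace.norm_eq]
  refine Real.sqrt_le_sqrt (Finset.sum_le_sum fun i _ => ?_)
  refine pow_le_pow_left₀ (norm_nonneg _) ?_ 2
  simp only [PiLp.sub_apply, PiLp.smul_apply, smul_eq_mul, Real.norm_eq_abs, abs_mul, abs_two]
  have h1 := abs_abs_sub_abs_le (y i) (z i)
  have h3 := abs_add_le (y i - z i) (|y i| - |z i|)
  have h4 : y i + |y i| + b i - (z i + |z i| + b i) = y i - z i + (|y i| - |z i|) := by ring
  rw [h4]
  linarith

/-- If `A + I` is invertible and `2‖(A + I)⁻¹‖₂ < 1`, then for every `b` the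
absolute value equation `A x − |x| = b` has exactly one solution. -/
theorem ave_unique_of_two_mul_spectralNorm_inv_add_lt_one
    {n : ℕ} (A : Matrix (Fin n) (Fin n) ℝ)
    (hinv : IsUnit (A + 1)) (h : 2 * sigmaMax (A + 1)⁻¹ < 1) :
    ∀ b : Fin n → ℝ, ∃! x : Fin n → ℝ, A.mulVec x - |x| = b := by
  intro b
  have hdet : IsUnit (A + 1).det := (Matrix.isUnit_iff_isUnit_det _).1 hinv
  let T : EuclideanSpace ℝ (Fin n) → EuclideanSpace ℝ (Fin n) := fun y =>
    Matrix.toEuclideanLin (A + 1)⁻¹ (WithLp.toLp 2 (fun i => y i + |y i| + b i))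
  have hT : ContractingWith ⟨2 * sigmaMax (A + 1)⁻¹,
      mul_nonneg zero_le_two (sigmaMax_nonneg _)⟩ T := by
    refine ⟨by exact_mod_cast h, LipschitzWith.of_dist_le_mul fun y z => ?_⟩
    rw [dist_eq_norm, dist_eq_norm, ← map_sub]
    refine (norm_toEuclideanLin_le_sigmaMax _ _).trans ?_
    refine (mul_le_mul_of_nonneg_left (norm_add_abs_sub_le b y z) (sigmaMax_nonneg _)).trans ?_
    change _ ≤ 2 * sigmaMax (A + 1)⁻¹ * ‖y - z‖
    exact le_of_eq (by ring)
  have key : ∀ x : Fin n → ℝ,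
      A.mulVec x - |x| = b ↔ Function.IsFixedPt T (WithLp.toLp 2 x) := by
    intro x
    have hfix : Function.IsFixedPt T (WithLp.toLp 2 x) ↔
        (A + 1)⁻¹.mulVec (x + |x| + b) = x := by
      constructor
      · intro hx
        exact congrArg WithLp.ofLp hx
      · intro hx
        exact congrArg (WithLp.toLp 2) hx
    rw [hfix]
    have hlin : (A + 1).mulVec x = A.mulVec x + x := by
      rw [Matrix.add_mulVec, Matrix.one_mulVec]
    constructor
    · intro hx
      have : x + |x| + b = (A + 1).mulVec x := by rw [hlin, ← hx]; abel
      rw [this, Matrix.mulVec_mulVec, Matrix.nonsing_inv_mul _ hdet, Matrix.one_mulVec]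
    · intro hx
      have hx' := congrArg (A + 1).mulVec hx
      rw [Matrix.mulVec_mulVec, Matrix.mul_nonsing_inv _ hdet, Matrix.one_mulVec, hlin] at hx'
      have : A.mulVec x = |x| + b := by
        rw [eq_sub_of_add_eq hx'.symm]
        abel
      rw [this]
      abel
  refine ⟨(ContractingWith.fixedPoint T hT).ofLp, ?_, fun x hx => ?_⟩
  · exact (key _).2 hT.fixedPoint_isFixedPt
  · exact congrArg WithLp.ofLp (hT.fixedPoint_unique ((key x).1 hx))
end

section
/- Let A be an n×n real matrix with σ_min(A − I) > 2, where σ_min denotes the minimum singular value. Then for every b ∈ ℝⁿ, the absolute value equation Ax − |x| = b has exactly one solution x ∈ ℝⁿ. -/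
/-!
Write `M = A - 1` and `s = σ_min(M) > 2`. The equation `A x - |x| = b` is equivalent to
`M x = b + (|x| - x)`. Since `‖M x‖ ≥ s ‖x‖` (`sigmaMin_mul_norm_le`), `M` is invertible and
`M⁻¹` is `1 / s`-Lipschitz, while `x ↦ |x| - x` is `2`-Lipschitz (`norm_negDouble_sub_le`). Hence
`x ↦ M⁻¹ (b + (|x| - x))` is a contraction with constant `2 / s < 1` in the Euclidean norm, and
Banach's fixed point theorem gives existence and uniqueness.
-/

/-- The minimum singular value of a square real matrix:
the infimum of `‖M x‖` over unit Euclidean-norm vectors `x`. -/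
noncomputable def sigmaMin {n : ℕ} (M : Matrix (Fin n) (Fin n) ℝ) : ℝ :=
  ⨅ x : Metric.sphere (0 : EuclideanSpace ℝ (Fin n)) 1,
    ‖Matrix.toEuclideanLin M x.1‖

lemma sigmaMin_mul_norm_le {n : ℕ} (M : Matrix (Fin n) (Fin n) ℝ)
    (x : EuclideanSpace ℝ (Fin n)) :
    sigmaMin M * ‖x‖ ≤ ‖Matrix.toEuclideanLin M x‖ := by
  rcases eq_or_ne x 0 with rfl | hx
  · simp
  have hx' : 0 < ‖x‖ := norm_pos_iff.mpr hx
  have hu : ‖x‖⁻¹ • x ∈ Metric.sphere (0 : EuclideanSpace ℝ (Fin n)) 1 := by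
    simp [norm_smul, hx'.ne']
  have hb : BddBelow (Set.range fun x : Metric.sphere (0 : EuclideanSpace ℝ (Fin n)) 1 =>
      ‖Matrix.toEuclideanLin M x.1‖) :=
    ⟨0, by rintro _ ⟨y, rfl⟩; exact norm_nonneg _⟩
  have h1 : sigmaMin M ≤ ‖Matrix.toEuclideanLin M (‖x‖⁻¹ • x)‖ := ciInf_le hb ⟨_, hu⟩
  rw [map_smul, norm_smul, norm_inv, norm_norm] at h1
  calc sigmaMin M * ‖x‖ ≤ ‖x‖⁻¹ * ‖Matrix.toEuclideanLin M x‖ * ‖x‖ := by gcongr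
    _ = ‖Matrix.toEuclideanLin M x‖ := by field_simp

/-- The map `x ↦ |x| - x` on Euclidean space, i.e. twice the negative part of `x`. -/
noncomputable def negDouble {n : ℕ} (x : EuclideanSpace ℝ (Fin n)) : EuclideanSpace ℝ (Fin n) :=
  WithLp.toLp 2 fun i => |x i| - x i

lemma norm_negDouble_sub_le {n : ℕ} (x y : EuclideanSpace ℝ (Fin n)) :
    ‖negDouble x - negDouble y‖ ≤ 2 * ‖x - y‖ := by
  refine (pow_le_pow_iff_left₀ (norm_nonneg _) (by positivity) two_ne_zero).mp ?_
  rw [mul_pow, EuclideanSpace.norm_sq_eq, EuclideanSpace.norm_sq_eq, Finset.mul_sum]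
  refine Finset.sum_le_sum fun i _ => ?_
  rw [← mul_pow]
  refine pow_le_pow_left₀ (norm_nonneg _) ?_ 2
  simp only [negDouble, PiLp.sub_apply, Real.norm_eq_abs]
  calc |(|x i| - x i) - (|y i| - y i)| = |(|x i| - |y i|) - (x i - y i)| := by ring_nf
    _ ≤ |(|x i| - |y i|)| + |x i - y i| := norm_sub_le (|x i| - |y i|) (x i - y i)
    _ ≤ |x i - y i| + |x i - y i| :=
      add_le_add (abs_abs_sub_abs_le (x i) (y i)) le_rfl
    _ = 2 * |x i - y i| := by ring

lemma mulVec_sub_abs_eq_iff {n : ℕ} (A : Matrix (Fin n) (Fin n) ℝ) (b x : Fin n → ℝ) :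
    A.mulVec x - |x| = b ↔
      Matrix.toEuclideanLin (A - 1) (WithLp.toLp 2 x) =
        WithLp.toLp 2 b + negDouble (WithLp.toLp 2 x) := by
  rw [← (WithLp.ofLp_injective 2).eq_iff, funext_iff, funext_iff]
  refine forall_congr' fun i => ?_
  simp only [negDouble, Matrix.toLpLin_toLp, Matrix.sub_mulVec, Matrix.one_mulVec,
    WithLp.ofLp_add, Pi.sub_apply, Pi.add_apply, Pi.abs_apply, Matrix.toLin'_apply]
  constructor <;> intro h <;> linarith

/-- If `σ_min(A − I) > 2`, then for every `b` the absolute value equation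
`A x − |x| = b` has exactly one solution. -/
theorem ave_unique_of_sigmaMin_sub_gt_two
    {n : ℕ} (A : Matrix (Fin n) (Fin n) ℝ) (h : 2 < sigmaMin (A - 1)) :
    ∀ b : Fin n → ℝ, ∃! x : Fin n → ℝ, A.mulVec x - |x| = b := by
  intro b
  set s := sigmaMin (A - 1) with hs
  have hs0 : 0 < s := by linarith
  set L := Matrix.toEuclideanLin (A - 1) with hL
  have hlow : ∀ x, s * ‖x‖ ≤ ‖L x‖ := sigmaMin_mul_norm_le (A - 1)
  have hinj : Function.Injective L := by
    refine (injective_iff_map_eq_zero L).mpr fun x hx => ?_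
    have h1 := hlow x
    rw [hx, norm_zero] at h1
    exact norm_le_zero_iff.mp (nonpos_of_mul_nonpos_right h1 hs0)
  let e := LinearEquiv.ofInjectiveEndo L hinj
  have he : ∀ x, L (e.symm x) = x := fun x => e.apply_symm_apply x
  let T : EuclideanSpace ℝ (Fin n) → EuclideanSpace ℝ (Fin n) :=
    fun x => e.symm (WithLp.toLp 2 b + negDouble x)
  have hT : ContractingWith (Real.toNNReal (2 / s)) T := by
    refine ⟨?_, LipschitzWith.of_dist_le_mul fun x y => ?_⟩
    · rw [Real.toNNReal_lt_one, div_lt_one hs0]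
      exact h
    · rw [Real.coe_toNNReal _ (by positivity), dist_eq_norm, dist_eq_norm, div_mul_eq_mul_div,
        le_div_iff₀' hs0]
      calc s * ‖T x - T y‖ ≤ ‖L (T x - T y)‖ := hlow _
        _ = ‖negDouble x - negDouble y‖ := by simp only [T, map_sub, he, add_sub_add_left_eq_sub]
        _ ≤ 2 * ‖x - y‖ := norm_negDouble_sub_le x y
  have hfix : ∀ x : EuclideanSpace ℝ (Fin n),
      L x = WithLp.toLp 2 b + negDouble x ↔ Function.IsFixedPt T x := fun x =>
    ⟨fun hx => hinj ((he _).trans hx.symm),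
      fun hx => by
        have h1 := he (WithLp.toLp 2 b + negDouble x)
        rwa [show e.symm (WithLp.toLp 2 b + negDouble x) = x from hx] at h1⟩
  refine ⟨WithLp.ofLp (ContractingWith.fixedPoint T hT), ?_, fun y hy => ?_⟩
  · exact (mulVec_sub_abs_eq_iff A b _).mpr ((hfix _).mpr hT.fixedPoint_isFixedPt)
  · have h1 := (hfix _).mp ((mulVec_sub_abs_eq_iff A b y).mp hy)
    exact congrArg WithLp.ofLp (hT.fixedPoint_unique h1)
end

section
/- Let A be an n×n real matrix such that A − I is invertible and 2‖(A − I)⁻¹‖₂ < 1, where ‖·‖₂ denotes the spectral norm. Then for every b ∈ ℝⁿ, the absolute value equation Ax − |x| = b has exactly one solution x ∈ ℝⁿ. -/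
/-- The supremum defining `sigmaMax` is over a bounded family, hence not a junk value, and it
bounds the operator by homogeneity. -/
theorem norm_le_sigmaMax_mul {n : ℕ} (M : Matrix (Fin n) (Fin n) ℝ)
    (v : EuclideanSpace ℝ (Fin n)) :
    ‖Matrix.toEuclideanLin M v‖ ≤ sigmaMax M * ‖v‖ := by
  rcases eq_or_ne v 0 with rfl | hv
  · simp
  have hbdd : BddAbove (Set.range fun x : Metric.sphere (0 : EuclideanSpace ℝ (Fin n)) 1 =>
      ‖Matrix.toEuclideanLin M x.1‖) := by
    refine ⟨‖LinearMap.toContinuousLinearMap (Matrix.toEuclideanLin M)‖, ?_⟩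
    rintro _ ⟨x, rfl⟩
    have hx : ‖x.1‖ = 1 := by simp
    simpa [hx] using
      (LinearMap.toContinuousLinearMap (Matrix.toEuclideanLin M)).le_opNorm x.1
  have hv' : 0 < ‖v‖ := norm_pos_iff.mpr hv
  have hmem : ‖v‖⁻¹ • v ∈ Metric.sphere (0 : EuclideanSpace ℝ (Fin n)) 1 := by
    rw [mem_sphere_zero_iff_norm, norm_smul, norm_inv, norm_norm, inv_mul_cancel₀ hv'.ne']
  have hle : ‖Matrix.toEuclideanLin M (‖v‖⁻¹ • v)‖ ≤ sigmaMax M := le_ciSup hbdd ⟨_, hmem⟩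
  rw [map_smul, norm_smul, norm_inv, norm_norm, inv_mul_le_iff₀ hv'] at hle
  linarith

/-- The map `x ↦ |x| - x` is `2`-Lipschitz for the Euclidean norm. -/
theorem norm_absSub_sub_le {n : ℕ} (x y : EuclideanSpace ℝ (Fin n)) :
    ‖WithLp.toLp 2 ((|x.ofLp| - x.ofLp) - (|y.ofLp| - y.ofLp))‖ ≤ 2 * ‖x - y‖ := by
  have h2 : 2 * ‖x - y‖ = ‖(2 : ℝ) • (x - y)‖ := by rw [norm_smul]; norm_num
  rw [h2, EuclideanSpace.norm_eq, EuclideanSpace.norm_eq]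
  refine Real.sqrt_le_sqrt (Finset.sum_le_sum fun i _ => ?_)
  simp only [Real.norm_eq_abs, sq_abs, PiLp.smul_apply, PiLp.sub_apply, Pi.sub_apply,
    Pi.abs_apply, smul_eq_mul]
  apply sq_le_sq.mpr
  have h1 := abs_abs_sub_abs_le_abs_sub (x.ofLp i) (y.ofLp i)
  calc |(|x.ofLp i| - x.ofLp i) - (|y.ofLp i| - y.ofLp i)|
      = |(|x.ofLp i| - |y.ofLp i|) - (x.ofLp i - y.ofLp i)| := by congr 1; ring
    _ ≤ |(|x.ofLp i| - |y.ofLp i|)| + |x.ofLp i - y.ofLp i| := abs_sub _ _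
    _ ≤ 2 * |x.ofLp i - y.ofLp i| := by linarith
    _ = |2 * (x.ofLp i - y.ofLp i)| := by rw [abs_mul, abs_two]

theorem ave_iff_fixed {n : ℕ} {A : Matrix (Fin n) (Fin n) ℝ} (hinv : IsUnit (A - 1))
    (b x : Fin n → ℝ) :
    A.mulVec x - |x| = b ↔ (A - 1)⁻¹.mulVec (|x| - x + b) = x := by
  have hdet : IsUnit (A - 1).det := (Matrix.isUnit_iff_isUnit_det _).mp hinv
  have hx : (A - 1).mulVec x = A.mulVec x - x := by rw [Matrix.sub_mulVec, Matrix.one_mulVec]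
  constructor
  · intro h
    have : |x| - x + b = (A - 1).mulVec x := by rw [hx, ← h]; abel
    rw [this, Matrix.mulVec_mulVec, Matrix.nonsing_inv_mul _ hdet, Matrix.one_mulVec]
  · intro h
    have h' := congrArg (A - 1).mulVec h
    rw [Matrix.mulVec_mulVec, Matrix.mul_nonsing_inv _ hdet, Matrix.one_mulVec, hx] at h'
    rw [eq_add_of_sub_eq h'.symm]
    abel

/-- If `A − I` is invertible and `2‖(A − I)⁻¹‖₂ < 1`, then for every `b` the
absolute value equation `A x − |x| = b` has exactly one solution. -/
theorem ave_unique_of_two_mul_spectralNorm_inv_sub_lt_one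
    {n : ℕ} (A : Matrix (Fin n) (Fin n) ℝ)
    (hinv : IsUnit (A - 1)) (h : 2 * sigmaMax (A - 1)⁻¹ < 1) :
    ∀ b : Fin n → ℝ, ∃! x : Fin n → ℝ, A.mulVec x - |x| = b := by
  intro b
  set M := (A - 1)⁻¹ with hM
  -- The contraction lives on `EuclideanSpace`, since `Fin n → ℝ` carries the sup norm.
  let T : EuclideanSpace ℝ (Fin n) → EuclideanSpace ℝ (Fin n) := fun x =>
    Matrix.toEuclideanLin M (WithLp.toLp 2 (|x.ofLp| - x.ofLp + b))
  have hT : ContractingWith (⟨2 * sigmaMax M, by linarith [sigmaMax_nonneg M]⟩ : NNReal) T := by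
    refine ⟨by exact_mod_cast h, LipschitzWith.of_dist_le_mul fun x y => ?_⟩
    have hsub : T x - T y = Matrix.toEuclideanLin M
        (WithLp.toLp 2 ((|x.ofLp| - x.ofLp) - (|y.ofLp| - y.ofLp))) := by
      simp only [T]
      rw [← map_sub, ← WithLp.toLp_sub, add_sub_add_right_eq_sub]
    rw [dist_eq_norm, dist_eq_norm, hsub]
    calc _ ≤ sigmaMax M * _ := norm_le_sigmaMax_mul M _
      _ ≤ sigmaMax M * (2 * ‖x - y‖) :=
        mul_le_mul_of_nonneg_left (norm_absSub_sub_le x y) (sigmaMax_nonneg M)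
      _ = 2 * sigmaMax M * ‖x - y‖ := by ring
  have hfix : ∀ x : EuclideanSpace ℝ (Fin n),
      Function.IsFixedPt T x ↔ A.mulVec x.ofLp - |x.ofLp| = b := by
    intro x
    rw [ave_iff_fixed hinv, ← hM]
    exact ⟨fun hx => congrArg WithLp.ofLp hx, fun hx => congrArg (WithLp.toLp 2) hx⟩
  refine ⟨(hT.fixedPoint T).ofLp, (hfix _).mp hT.fixedPoint_isFixedPt, fun y hy => ?_⟩
  exact congrArg WithLp.ofLp (hT.fixedPoint_unique ((hfix (WithLp.toLp 2 y)).mpr hy))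
end
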